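/- Let k be a field of characteristic different from 2 and let q₁, q₂, q₃ ∈ k[x,z] be binary quadratic forms. Then Σ_{i=1}^{3} Σ_{j=1}^{3} (q_i,q_j)₂ · q_i* · q_j* = 0 in k[x,z]; in other words, the point (q₁*(x,z) : q₂*(x,z) : q₃*(x,z)) always lies on the conic Σ_{i,j} A_{ij}·X_i·X_j = 0 with A_{ij} = (q_i,q_j)₂. -/

import Mathlib

open MvPolynomial

/-- Iterated partial derivative in the variable `x` (the variable `0`). -/
noncomputable def dX {k : Type*} [CommSemiring k] (n : ℕ) (p : MvPolynomial (Fin 2) k) :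
    MvPolynomial (Fin 2) k :=
  (fun q => pderiv (0 : Fin 2) q)^[n] p

/-- Iterated partial derivative in the variable `z` (the variable `1`). -/
noncomputable def dZ {k : Type*} [CommSemiring k] (n : ℕ) (p : MvPolynomial (Fin 2) k) :
    MvPolynomial (Fin 2) k :=
  (fun q => pderiv (1 : Fin 2) q)^[n] p

/-- The `h`-th transvectant of two binary forms of degrees `r₁` and `r₂`. -/
noncomputable def transvectant {k : Type*} [Field k] (r₁ r₂ h : ℕ)
    (f g : MvPolynomial (Fin 2) k) : MvPolynomial (Fin 2) k :=
  C ((((r₁ - h).factorial * (r₂ - h).factorial : ℕ) : k) /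
      (((r₁.factorial * r₂.factorial : ℕ)) : k)) *
    ∑ j ∈ Finset.range (h + 1),
      C ((-1 : k) ^ j * (h.choose j : k)) * (dX (h - j) (dZ j f) * dX j (dZ (h - j) g))

/-!
Encode a binary form `f` of degree `r` by the vector `u = (f_xx, f_xz, f_zz) / (r (r - 1))`. By
Euler's identity, `(f, g)₂` is the polarized discriminant of the vectors of `f` and `g`, and
`(f, g)₁` is the dot product of their cross product with `w = (z², -xz, x²)`. If `u₀, u₁, u₂`
belong to `q₀, q₁, q₂`, Cramer's rule says `∑ qᵢ* uᵢ = det (u₀, u₁, u₂) w`. The sum in question is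
therefore `det (u₀, u₁, u₂)²` times the value of the polarized discriminant at `(w, w)`, and this
value is zero because `w` represents the square of the linear form which vanishes at `(x, z)`. For
quadratic forms `(qᵢ, qⱼ)₂` is a constant, but the argument applies to forms of any degrees `≥ 2`.
-/

open Matrix
open scoped Nat

section LinearAlgebra

variable {R : Type*} [CommRing R]

theorem sum_det_updateRow_smul {n : Type*} [Fintype n] [DecidableEq n] (A : Matrix n n R)
    (w : n → R) : ∑ i, (A.updateRow i w).det • A i = A.det • w := by
  simpa only [mulVec_transpose, vecMul_eq_sum, cramer_transpose_apply, det_transpose]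
    using mulVec_cramer Aᵀ w

theorem sum_sum_bilinForm_mul_det_updateRow {n : Type*} [Fintype n] [DecidableEq n]
    (B : LinearMap.BilinForm R (n → R)) (A : Matrix n n R) (w : n → R) :
    ∑ i, ∑ j, B (A i) (A j) * (A.updateRow i w).det * (A.updateRow j w).det =
      A.det ^ 2 * B w w := by
  calc ∑ i, ∑ j, B (A i) (A j) * (A.updateRow i w).det * (A.updateRow j w).det
      = B (∑ i, (A.updateRow i w).det • A i) (∑ j, (A.updateRow j w).det • A j) := by
        simp only [map_sum, map_smul, LinearMap.sum_apply, LinearMap.smul_apply, smul_eq_mul,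
          Finset.mul_sum]
        rw [Finset.sum_comm]
        exact Finset.sum_congr rfl fun i _ => Finset.sum_congr rfl fun j _ => by ring
    _ = A.det ^ 2 * B w w := by
        simp only [sum_det_updateRow_smul, map_smul, LinearMap.smul_apply, smul_eq_mul]
        ring

theorem det_updateRow_eq_dotProduct_cross (A : Matrix (Fin 3) (Fin 3) R) (w : Fin 3 → R)
    (i : Fin 3) : (A.updateRow i w).det = w ⬝ᵥ A (i + 1) ⨯₃ A (i + 2) := by
  rw [vec3_dotProduct, cross_apply]
  fin_cases i <;>
    simp only [det_fin_three, updateRow_apply, Fin.reduceFinMk, Fin.reduceAdd, Fin.reduceEq,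
      reduceIte, cons_val] <;> ring

/-- The polarized discriminant of binary quadratic forms, up to a constant factor: the symmetric
bilinear form whose value at `(u, u)` is `2 (u₀ u₂ - u₁²)`, where `u` is the vector of the form
`u₀ x² + 2 u₁ xz + u₂ z²`. -/
def polarDiscr : LinearMap.BilinForm R (Fin 3 → R) :=
  toBilin' !![0, 0, 1; 0, -2, 0; 1, 0, 0]

theorem polarDiscr_apply (u v : Fin 3 → R) :
    polarDiscr u v = u 0 * v 2 - 2 * (u 1 * v 1) + u 2 * v 0 := by
  simp only [polarDiscr, toBilin'_apply, Fin.sum_univ_three, of_apply, cons_val]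
  ring

/-- The vector, in the convention of `polarDiscr`, of the square of the linear form `b x - a z`,
which vanishes at the point `(a, b)`. -/
def sqLinearVec (a b : R) : Fin 3 → R :=
  ![b ^ 2, -(a * b), a ^ 2]

theorem polarDiscr_sqLinearVec_self (a b : R) :
    polarDiscr (sqLinearVec a b) (sqLinearVec a b) = 0 := by
  simp only [polarDiscr_apply, sqLinearVec, cons_val]
  ring

theorem sqLinearVec_dotProduct_cross (a b : R) (u v : Fin 3 → R) :
    sqLinearVec a b ⬝ᵥ u ⨯₃ v =
      (a * u 0 + b * u 1) * (a * v 1 + b * v 2) - (a * u 1 + b * u 2) * (a * v 0 + b * v 1) := by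
  simp only [sqLinearVec, cross_apply, vec3_dotProduct, cons_val]
  ring

end LinearAlgebra

section PartialDerivatives

variable {R σ : Type*} [CommSemiring R]

theorem pderiv_pderiv_comm (i j : σ) (f : MvPolynomial σ R) :
    pderiv i (pderiv j f) = pderiv j (pderiv i f) := by
  classical
  ext m
  rcases eq_or_ne i j with rfl | hij
  · rfl
  · simp [coeff_pderiv, hij, hij.symm, add_right_comm, mul_right_comm]

theorem isHomogeneous_dX {f : MvPolynomial (Fin 2) R} {r : ℕ} (hf : f.IsHomogeneous r) (n : ℕ) :
    (dX n f).IsHomogeneous (r - n) := by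
  induction n with
  | zero => exact hf
  | succ n ih => simpa only [dX, Function.iterate_succ_apply', Nat.sub_sub] using ih.pderiv

theorem isHomogeneous_dZ {f : MvPolynomial (Fin 2) R} {r : ℕ} (hf : f.IsHomogeneous r) (n : ℕ) :
    (dZ n f).IsHomogeneous (r - n) := by
  induction n with
  | zero => exact hf
  | succ n ih => simpa only [dZ, Function.iterate_succ_apply', Nat.sub_sub] using ih.pderiv

theorem C_constantCoeff_of_isHomogeneous_zero {f : MvPolynomial σ R} (hf : f.IsHomogeneous 0) :
    C (constantCoeff f) = f :=
  (totalDegree_eq_zero_iff_eq_C.mp ((totalDegree_zero_iff_isHomogeneous _).mpr hf)).symm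

end PartialDerivatives

section Transvectants

variable {k : Type*} [Field k]

theorem isHomogeneous_transvectant {r₁ r₂ : ℕ} {f g : MvPolynomial (Fin 2) k}
    (hf : f.IsHomogeneous r₁) (hg : g.IsHomogeneous r₂) (h : ℕ) :
    (transvectant r₁ r₂ h f g).IsHomogeneous (r₁ - h + (r₂ - h)) := by
  refine IsHomogeneous.C_mul (IsHomogeneous.sum _ _ _ fun j hj => IsHomogeneous.C_mul ?_ _) _
  have hj : j ≤ h := Nat.lt_succ_iff.mp (Finset.mem_range.mp hj)
  have hf' := isHomogeneous_dX (isHomogeneous_dZ hf j) (h - j)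
  have hg' := isHomogeneous_dX (isHomogeneous_dZ hg (h - j)) j
  convert hf'.mul hg' using 2 <;> omega

theorem transvectant_one (r₁ r₂ : ℕ) (f g : MvPolynomial (Fin 2) k) :
    transvectant r₁ r₂ 1 f g =
      C (((r₁ - 1)! : k) / r₁ !) * pderiv 0 f * (C (((r₂ - 1)! : k) / r₂ !) * pderiv 1 g) -
        C (((r₁ - 1)! : k) / r₁ !) * pderiv 1 f * (C (((r₂ - 1)! : k) / r₂ !) * pderiv 0 g) := by
  simp only [transvectant, Finset.sum_range_succ, Finset.sum_range_zero, dX, dZ, Nat.reduceSub,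
    Nat.sub_self, Function.iterate_zero, Function.iterate_one, id_eq, Nat.choose_zero_right,
    Nat.choose_self, Nat.cast_one, Nat.cast_mul, mul_div_mul_comm, C_mul, C_pow, C_neg, C_1]
  ring

/-- The vector of normalized second partial derivatives `(f_xx, f_xz, f_zz) / (r (r - 1))` of a
binary form `f` of degree `r ≥ 2`, the scalar being written with factorials as in `transvectant`.
For `r = 2` it holds the coefficients of `f` in the convention of `polarDiscr`. -/
noncomputable def hessianVec (r : ℕ) (f : MvPolynomial (Fin 2) k) :
    Fin 3 → MvPolynomial (Fin 2) k :=
  (C (((r - 2)! : k) / r !) : MvPolynomial (Fin 2) k) •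
    ![pderiv 0 (pderiv 0 f), pderiv 0 (pderiv 1 f), pderiv 1 (pderiv 1 f)]

theorem transvectant_two (r₁ r₂ : ℕ) (f g : MvPolynomial (Fin 2) k) :
    transvectant r₁ r₂ 2 f g = polarDiscr (hessianVec r₁ f) (hessianVec r₂ g) := by
  simp only [transvectant, Finset.sum_range_succ, Finset.sum_range_zero, dX, dZ, Nat.reduceAdd,
    Nat.reduceSub, Nat.sub_self, Nat.sub_zero, Function.iterate_succ, Function.iterate_zero,
    Function.comp_apply, id_eq, Nat.choose_zero_right, Nat.choose_one_right, Nat.choose_self,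
    Nat.cast_one, Nat.cast_ofNat, Nat.cast_mul, mul_div_mul_comm, C_mul, C_pow, C_neg, C_1,
    map_ofNat, polarDiscr_apply, hessianVec, Pi.smul_apply, smul_eq_mul, cons_val]
  ring

theorem C_mul_pderiv_eq_sum {σ : Type*} [Fintype σ] {r : ℕ} (hr : 2 ≤ r) {f : MvPolynomial σ k}
    (hf : f.IsHomogeneous r) (i : σ) :
    C (((r - 1)! : k) / r !) * pderiv i f =
      ∑ j, X j * (C (((r - 2)! : k) / r !) * pderiv j (pderiv i f)) := by
  have hfact : (r - 1)! = (r - 1) * (r - 2)! := (Nat.mul_factorial_pred (by omega)).symm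
  calc C (((r - 1)! : k) / r !) * pderiv i f
      = C (((r - 2)! : k) / r !) * ((r - 1) • pderiv i f) := by
        rw [hfact, Nat.cast_mul, mul_div_assoc, C_mul, nsmul_eq_mul, map_natCast]
        ring
    _ = ∑ j, X j * (C (((r - 2)! : k) / r !) * pderiv j (pderiv i f)) := by
        simp only [← hf.pderiv.sum_X_mul_pderiv, Finset.mul_sum, mul_left_comm]

theorem transvectant_one_eq_dotProduct_cross {r₁ r₂ : ℕ} (hr₁ : 2 ≤ r₁) (hr₂ : 2 ≤ r₂)
    {f g : MvPolynomial (Fin 2) k} (hf : f.IsHomogeneous r₁) (hg : g.IsHomogeneous r₂) :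
    transvectant r₁ r₂ 1 f g =
      sqLinearVec (X 0) (X 1) ⬝ᵥ hessianVec r₁ f ⨯₃ hessianVec r₂ g := by
  simp only [transvectant_one, C_mul_pderiv_eq_sum hr₁ hf, C_mul_pderiv_eq_sum hr₂ hg,
    Fin.sum_univ_two, pderiv_pderiv_comm (1 : Fin 2) 0]
  simp [sqLinearVec_dotProduct_cross, hessianVec]

end Transvectants

theorem statement7_general {k : Type*} [Field k] (r : Fin 3 → ℕ) (hr : ∀ i, 2 ≤ r i)
    (_hfact : ∀ i, ((r i)! : k) ≠ 0)
    (q : Fin 3 → MvPolynomial (Fin 2) k) (hq : ∀ i, (q i).IsHomogeneous (r i)) :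
    ∑ i : Fin 3, ∑ j : Fin 3,
      transvectant (r i) (r j) 2 (q i) (q j) *
        transvectant (r (i + 1)) (r (i + 2)) 1 (q (i + 1)) (q (i + 2)) *
        transvectant (r (j + 1)) (r (j + 2)) 1 (q (j + 1)) (q (j + 2)) = 0 := by
  let A : Matrix (Fin 3) (Fin 3) (MvPolynomial (Fin 2) k) := fun i => hessianVec (r i) (q i)
  let w : Fin 3 → MvPolynomial (Fin 2) k := sqLinearVec (X 0) (X 1)
  have transvectant_eq_det (i : Fin 3) :
      transvectant (r (i + 1)) (r (i + 2)) 1 (q (i + 1)) (q (i + 2)) = (A.updateRow i w).det := by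
    rw [det_updateRow_eq_dotProduct_cross,
      transvectant_one_eq_dotProduct_cross (hr _) (hr _) (hq _) (hq _)]
  simp only [transvectant_two, transvectant_eq_det]
  rw [sum_sum_bilinForm_mul_det_updateRow polarDiscr A w, polarDiscr_sqLinearVec_self, mul_zero]

/-- For binary quadratic forms `q₀,q₁,q₂` over a field of characteristic `≠ 2`, with
`q₀* = (q₁,q₂)₁`, `q₁* = (q₂,q₀)₁`, `q₂* = (q₀,q₁)₁` and `A_{ij} = (q_i,q_j)₂` (constants),
one has `Σ_{i,j} A_{ij}·q_i*·q_j* = 0`:  the point `(q₀* : q₁* : q₂*)` always lies on the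
conic `Σ_{i,j} A_{ij}·X_i·X_j = 0`. -/
theorem statement7 {k : Type*} [Field k] (hchar : (2 : k) ≠ 0)
    (q : Fin 3 → MvPolynomial (Fin 2) k) (hq : ∀ i, (q i).IsHomogeneous 2) :
    ∑ i : Fin 3, ∑ j : Fin 3,
      C (constantCoeff (transvectant 2 2 2 (q i) (q j))) *
        transvectant 2 2 1 (q (i + 1)) (q (i + 2)) *
        transvectant 2 2 1 (q (j + 1)) (q (j + 2)) = 0 := by
  simpa only [C_constantCoeff_of_isHomogeneous_zero (isHomogeneous_transvectant (hq _) (hq _) 2)]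
    using statement7_general (fun _ => 2) (fun _ => le_rfl) (fun _ => by simpa using hchar) q hq
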